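/- No minimal Lorentzian surface in 𝔼⁴₁ has a non-harmonic biharmonic Gauss map (Corollary 4.3): in the setting of a minimal Lorentzian surface x(s,t) = α(s) + β(t) in null coordinates with I₁ × I₂ connected, if Δ(Δν) = 0 at every point, where Δξ := (2/m²)·∂²ξ/∂s∂t, then Δν = 0 at every point; i.e. if the Gauss map is biharmonic then it is harmonic. -/

import Mathlib

noncomputable section

/-- The Minkowski bilinear form on `ℝ⁴ = Fin 4 → ℝ`:
`B(v,w) = -v₀w₀ + v₁w₁ + v₂w₂ + v₃w₃`. -/
def B4 (v w : Fin 4 → ℝ) : ℝ :=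
  -(v 0 * w 0) + v 1 * w 1 + v 2 * w 2 + v 3 * w 3

/-- The wedge product `v ∧ w`, modelled concretely as the antisymmetric array
`(i,j) ↦ vᵢwⱼ - vⱼwᵢ` (a faithful model of the second exterior power `Λ²(ℝ⁴)`). -/
def wedge (v w : Fin 4 → ℝ) : Fin 4 → Fin 4 → ℝ :=
  fun i j => v i * w j - v j * w i

/-- Partial derivative of a two-parameter map with respect to the first variable. -/
def pds {E : Type*} [NormedAddCommGroup E] [NormedSpace ℝ E]
    (x : ℝ → ℝ → E) (s t : ℝ) : E :=
  deriv (fun u => x u t) s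

/-- Partial derivative of a two-parameter map with respect to the second variable. -/
def pdt {E : Type*} [NormedAddCommGroup E] [NormedSpace ℝ E]
    (x : ℝ → ℝ → E) (s t : ℝ) : E :=
  deriv (fun u => x s u) t

/-- `m²(s,t) = -B(α'(s), β'(t))`, the conformal factor of the induced metric
`-m²(ds⊗dt + dt⊗ds)` of the minimal Lorentzian surface `x(s,t) = α(s) + β(t)`. -/
def msq (α β : ℝ → Fin 4 → ℝ) (s t : ℝ) : ℝ :=
  -B4 (deriv α s) (deriv β t)

/-- `η₁ = h(∂s,∂s)`: the component of `x_{ss} = α''` orthogonal to the tangent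
plane `span{α'(s), β'(t)}`. -/
def eta1 (α β : ℝ → Fin 4 → ℝ) (s t : ℝ) : Fin 4 → ℝ :=
  deriv (deriv α) s
    - (B4 (deriv (deriv α) s) (deriv β t) / B4 (deriv α s) (deriv β t)) • deriv α s

/-- `η₂ = h(∂t,∂t)`: the component of `x_{tt} = β''` orthogonal to the tangent
plane `span{α'(s), β'(t)}`. -/
def eta2 (α β : ℝ → Fin 4 → ℝ) (s t : ℝ) : Fin 4 → ℝ :=
  deriv (deriv β) t
    - (B4 (deriv (deriv β) t) (deriv α s) / B4 (deriv α s) (deriv β t)) • deriv β t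

/-- The Gauss map `ν = (1/m²)·(α'(s) ∧ β'(t))`, valued in (a model of) `Λ²(ℝ⁴)`. -/
def gaussMap (α β : ℝ → Fin 4 → ℝ) (s t : ℝ) : Fin 4 → Fin 4 → ℝ :=
  (1 / msq α β s t) • wedge (deriv α s) (deriv β t)

/-- The Laplace–Beltrami operator of the induced metric `-m²(ds⊗dt + dt⊗ds)`
(with the sign convention of the paper) acting on `Λ²(ℝ⁴)`-valued maps:
`Δξ = (2/m²)·∂²ξ/∂s∂t`. -/
def lap (α β : ℝ → Fin 4 → ℝ) (ξ : ℝ → ℝ → (Fin 4 → Fin 4 → ℝ)) (s t : ℝ) :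
    Fin 4 → Fin 4 → ℝ :=
  (2 / msq α β s t) • pds (pdt ξ) s t

open scoped ContDiff

/-- smooth two-parameter maps -/
def Gd {E : Type*} [NormedAddCommGroup E] [NormedSpace ℝ E] (I J : Set ℝ) (f : ℝ → ℝ → E) : Prop :=
  ContDiffOn ℝ ∞ (fun p : ℝ × ℝ => f p.1 p.2) (I ×ˢ J)

section aux
variable {E : Type*} [NormedAddCommGroup E] [NormedSpace ℝ E] {I J : Set ℝ}

theorem Gd.hasS {f : ℝ → ℝ → E} (hI : IsOpen I) (hJ : IsOpen J) (h : Gd I J f) {s t : ℝ}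
    (hs : s ∈ I) (ht : t ∈ J) :
    HasDerivAt (fun u => f u t) (fderiv ℝ (fun p : ℝ × ℝ => f p.1 p.2) (s, t) (1, 0)) s := by
  have h1 : DifferentiableAt ℝ (fun p : ℝ × ℝ => f p.1 p.2) (s, t) :=
    (h.contDiffAt ((hI.prod hJ).mem_nhds ⟨hs, ht⟩)).differentiableAt (by simp)
  have h2 : HasDerivAt (fun u : ℝ => (u, t)) ((1 : ℝ), (0 : ℝ)) s :=
    (hasDerivAt_id s).prodMk (hasDerivAt_const s t)
  exact h1.hasFDerivAt.comp_hasDerivAt s h2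

theorem Gd.hasT {f : ℝ → ℝ → E} (hI : IsOpen I) (hJ : IsOpen J) (h : Gd I J f) {s t : ℝ}
    (hs : s ∈ I) (ht : t ∈ J) :
    HasDerivAt (fun u => f s u) (fderiv ℝ (fun p : ℝ × ℝ => f p.1 p.2) (s, t) (0, 1)) t := by
  have h1 : DifferentiableAt ℝ (fun p : ℝ × ℝ => f p.1 p.2) (s, t) :=
    (h.contDiffAt ((hI.prod hJ).mem_nhds ⟨hs, ht⟩)).differentiableAt (by simp)
  have h2 : HasDerivAt (fun u : ℝ => (s, u)) ((0 : ℝ), (1 : ℝ)) t :=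
    (hasDerivAt_const t s).prodMk (hasDerivAt_id t)
  exact h1.hasFDerivAt.comp_hasDerivAt t h2

theorem Gd.dS {f : ℝ → ℝ → E} (hI : IsOpen I) (hJ : IsOpen J) (h : Gd I J f) {s t : ℝ}
    (hs : s ∈ I) (ht : t ∈ J) : HasDerivAt (fun u => f u t) (pds f s t) s :=
  (h.hasS hI hJ hs ht).differentiableAt.hasDerivAt

theorem Gd.dT {f : ℝ → ℝ → E} (hI : IsOpen I) (hJ : IsOpen J) (h : Gd I J f) {s t : ℝ}
    (hs : s ∈ I) (ht : t ∈ J) : HasDerivAt (fun u => f s u) (pdt f s t) t :=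
  (h.hasT hI hJ hs ht).differentiableAt.hasDerivAt

theorem Gd.pds {f : ℝ → ℝ → E} (hI : IsOpen I) (hJ : IsOpen J) (h : Gd I J f) :
    Gd I J (pds f) := by
  have h1 := (ContDiffOn.fderiv_of_isOpen (m := ∞) h (hI.prod hJ) (by simp)).clm_apply
    (contDiffOn_const (c := ((1 : ℝ), (0 : ℝ))))
  exact h1.congr fun p hp => (h.hasS hI hJ hp.1 hp.2).deriv

theorem Gd.pdt {f : ℝ → ℝ → E} (hI : IsOpen I) (hJ : IsOpen J) (h : Gd I J f) :
    Gd I J (pdt f) := by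
  have h1 := (ContDiffOn.fderiv_of_isOpen (m := ∞) h (hI.prod hJ) (by simp)).clm_apply
    (contDiffOn_const (c := ((0 : ℝ), (1 : ℝ))))
  exact h1.congr fun p hp => (h.hasT hI hJ hp.1 hp.2).deriv

theorem pds_eq_of {f g : ℝ → ℝ → E} (hI : IsOpen I) {s t : ℝ} {d : E}
    (hfg : ∀ s ∈ I, ∀ t ∈ J, f s t = g s t) (hs : s ∈ I) (ht : t ∈ J)
    (h : HasDerivAt (fun u => g u t) d s) : pds f s t = d :=
  (h.congr_of_eventuallyEq
    (Filter.mem_of_superset (hI.mem_nhds hs) fun u hu => hfg u hu t ht)).deriv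

theorem pdt_eq_of {f g : ℝ → ℝ → E} (hJ : IsOpen J) {s t : ℝ} {d : E}
    (hfg : ∀ s ∈ I, ∀ t ∈ J, f s t = g s t) (hs : s ∈ I) (ht : t ∈ J)
    (h : HasDerivAt (fun u => g s u) d t) : pdt f s t = d :=
  (h.congr_of_eventuallyEq
    (Filter.mem_of_superset (hJ.mem_nhds ht) fun u hu => hfg s hs u hu)).deriv

theorem abstractH (hI : IsOpen I) (hJ : IsOpen J) (F : Fin 3 → ℝ → ℝ → ℂ) (r : ℝ → ℝ → ℂ)
    (hF : ∀ k, Gd I J (F k)) (hr : Gd I J r) (hr0 : ∀ s ∈ I, ∀ t ∈ J, r s t ≠ 0)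
    (h1 : ∀ s ∈ I, ∀ t ∈ J, F 0 s t * F 0 s t + F 1 s t * F 1 s t + F 2 s t * F 2 s t = 1)
    (htt : ∀ s ∈ I, ∀ t ∈ J, pdt (F 0) s t * pdt (F 0) s t + pdt (F 1) s t * pdt (F 1) s t
      + pdt (F 2) s t * pdt (F 2) s t = 0)
    (hst : ∀ s ∈ I, ∀ t ∈ J, ∀ k, pds (pdt (F k)) s t =
      -(pds (F 0) s t * pdt (F 0) s t + pds (F 1) s t * pdt (F 1) s t
      + pds (F 2) s t * pdt (F 2) s t) * F k s t)
    (hbi : ∀ s ∈ I, ∀ t ∈ J, ∀ k, pds (pdt (fun s t => r s t * pds (pdt (F k)) s t)) s t = 0) :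
    ∀ s ∈ I, ∀ t ∈ J, ∀ k, pds (pdt (F k)) s t = 0 := by
  have cS : ∀ s ∈ I, ∀ t ∈ J,
      F 0 s t * pds (F 0) s t + F 1 s t * pds (F 1) s t + F 2 s t * pds (F 2) s t = 0 := by
    intro s hs t ht
    have d := fun k => (hF k).dS hI hJ hs ht
    have e := pds_eq_of hI (fun s hs t ht => (h1 s hs t ht).symm) hs ht
      ((((d 0).mul (d 0)).add ((d 1).mul (d 1))).add ((d 2).mul (d 2)))
    simp only [pds, deriv_const] at e
    simp only [pds]
    linear_combination (-1/2) * e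
  have cT : ∀ s ∈ I, ∀ t ∈ J,
      F 0 s t * pdt (F 0) s t + F 1 s t * pdt (F 1) s t + F 2 s t * pdt (F 2) s t = 0 := by
    intro s hs t ht
    have d := fun k => (hF k).dT hI hJ hs ht
    have e := pdt_eq_of hJ (fun s hs t ht => (h1 s hs t ht).symm) hs ht
      ((((d 0).mul (d 0)).add ((d 1).mul (d 1))).add ((d 2).mul (d 2)))
    simp only [pdt, deriv_const] at e
    simp only [pdt]
    linear_combination (-1/2) * e
  obtain ⟨H, hH⟩ : ∃ H : ℝ → ℝ → ℂ, H = fun s t => pds (F 0) s t * pdt (F 0) s t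
      + pds (F 1) s t * pdt (F 1) s t + pds (F 2) s t * pdt (F 2) s t := ⟨_, rfl⟩
  have GH : Gd I J H := by
    have a := fun k => (hF k).pds hI hJ
    have b := fun k => (hF k).pdt hI hJ
    rw [hH]
    exact (((a 0).mul (b 0)).add ((a 1).mul (b 1))).add ((a 2).mul (b 2))
  obtain ⟨g, hg⟩ : ∃ g : ℝ → ℝ → ℂ, g = fun s t => r s t * H s t := ⟨_, rfl⟩
  have Gg : Gd I J g := by rw [hg]; exact hr.mul GH
  have X0 : ∀ k, ∀ s ∈ I, ∀ t ∈ J, r s t * pds (pdt (F k)) s t = -(g s t * F k s t) := by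
    intro k s hs t ht
    rw [hst s hs t ht k, hg, hH]; ring
  have X1 : ∀ k, ∀ s ∈ I, ∀ t ∈ J, pdt (fun s t => r s t * pds (pdt (F k)) s t) s t
      = -(pdt g s t * F k s t + g s t * pdt (F k) s t) := by
    intro k s hs t ht
    exact pdt_eq_of hJ (X0 k) hs ht (((Gg.dT hI hJ hs ht).mul ((hF k).dT hI hJ hs ht)).neg)
  have X2 : ∀ k, ∀ s ∈ I, ∀ t ∈ J,
      (pds (pdt g) s t * F k s t + pdt g s t * pds (F k) s t)
        + (pds g s t * pdt (F k) s t + g s t * pds (pdt (F k)) s t) = 0 := by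
    intro k s hs t ht
    have e := pds_eq_of hI (X1 k) hs ht
      (((((Gg.pdt hI hJ).dS hI hJ hs ht).mul ((hF k).dS hI hJ hs ht)).add
        ((Gg.dS hI hJ hs ht).mul (((hF k).pdt hI hJ).dS hI hJ hs ht))).neg)
    rw [hbi s hs t ht k] at e
    linear_combination e
  have Y1 : ∀ s ∈ I, ∀ t ∈ J, pdt g s t * H s t = 0 := by
    intro s hs t ht
    have x := fun k => X2 k s hs t ht
    simp only [hst s hs t ht] at x
    rw [hH]
    linear_combination pdt (F 0) s t * x 0 + pdt (F 1) s t * x 1 + pdt (F 2) s t * x 2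
      - (pds (pdt g) s t - g s t * (pds (F 0) s t * pdt (F 0) s t + pds (F 1) s t * pdt (F 1) s t
      + pds (F 2) s t * pdt (F 2) s t)) * cT s hs t ht - pds g s t * htt s hs t ht
  have Y2 : ∀ s ∈ I, ∀ t ∈ J, pds (pdt g) s t - g s t * H s t = 0 := by
    intro s hs t ht
    have x := fun k => X2 k s hs t ht
    simp only [hst s hs t ht] at x
    rw [hH]
    linear_combination F 0 s t * x 0 + F 1 s t * x 1 + F 2 s t * x 2
      - (pds (pdt g) s t - g s t * (pds (F 0) s t * pdt (F 0) s t + pds (F 1) s t * pdt (F 1) s t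
      + pds (F 2) s t * pdt (F 2) s t)) * h1 s hs t ht - pds g s t * cT s hs t ht
      - pdt g s t * cS s hs t ht
  intro s hs t ht k
  have H0 : H s t = 0 := by
    by_contra hne
    have e := pds_eq_of hI (fun s hs t ht => (Y1 s hs t ht).symm) hs ht
      (((Gg.pdt hI hJ).dS hI hJ hs ht).mul (GH.dS hI hJ hs ht))
    have e0 : pdt g s t = 0 := (mul_eq_zero.1 (Y1 s hs t ht)).resolve_right hne
    rw [e0, zero_mul, add_zero] at e
    have e1 : pds (pdt g) s t = 0 := by
      have : pds (fun _ _ : ℝ => (0 : ℂ)) s t = 0 := by simp [pds]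
      rw [this] at e
      exact (mul_eq_zero.1 e.symm).resolve_right hne
    have e2 := Y2 s hs t ht
    rw [e1, hg] at e2
    have := hr0 s hs t ht
    simp_all
  rw [hst s hs t ht k]
  rw [hH] at H0
  simp only at H0
  rw [H0]; ring

end aux

/-- complexified self-dual component -/
def sd (k : Fin 3) (x0 : Fin 4 → Fin 4 → ℝ) : ℂ :=
  ⟨x0 0 ((![1, 2, 3] : Fin 3 → Fin 4) k),
    x0 ((![2, 3, 1] : Fin 3 → Fin 4) k) ((![3, 1, 2] : Fin 3 → Fin 4) k)⟩

/-- the same as a continuous linear map -/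
def sdL (k : Fin 3) : (Fin 4 → Fin 4 → ℝ) →L[ℝ] ℂ :=
  LinearMap.toContinuousLinearMap
    { toFun := sd k
      map_add' := fun x y => by apply Complex.ext <;> simp [sd]
      map_smul' := fun c x => by apply Complex.ext <;> simp [sd] }

theorem sdL_apply (k : Fin 3) (x0 : Fin 4 → Fin 4 → ℝ) : sdL k x0 = sd k x0 := rfl

/-- 4x4 determinant, up to sign -/
def dt4 (x y z w : Fin 4 → ℝ) : ℝ :=
  wedge x y 0 1 * wedge z w 2 3 + wedge x y 2 3 * wedge z w 0 1
  + (wedge x y 0 2 * wedge z w 3 1 + wedge x y 3 1 * wedge z w 0 2)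
  + (wedge x y 0 3 * wedge z w 1 2 + wedge x y 1 2 * wedge z w 0 3)

theorem sd_dot (x y z w : Fin 4 → ℝ) :
    sd 0 (wedge x y) * sd 0 (wedge z w) + sd 1 (wedge x y) * sd 1 (wedge z w)
      + sd 2 (wedge x y) * sd 2 (wedge z w)
      = ⟨B4 x w * B4 y z - B4 x z * B4 y w, dt4 x y z w⟩ := by
  apply Complex.ext <;> simp [sd, wedge, B4, dt4] <;> ring

/-- Laplace expansion of a Gram determinant -/
def gr (a b p q : Fin 4 → ℝ) (i j : Fin 4) : ℝ :=
  wedge p q i j * (B4 a a * B4 b b - B4 a b ^ 2)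
  - (p i * B4 q a - B4 p a * q i) * (a j * B4 b b - B4 a b * b j)
  + (p i * B4 q b - B4 p b * q i) * (a j * B4 a b - B4 a a * b j)
  + (p j * B4 q a - B4 p a * q j) * (a i * B4 b b - B4 a b * b i)
  - (p j * B4 q b - B4 p b * q j) * (a i * B4 a b - B4 a a * b i)
  + (B4 p a * B4 q b - B4 p b * B4 q a) * wedge a b i j

theorem gr_eq (a b p q : Fin 4 → ℝ) (k : Fin 3) :
    gr a b p q 0 ((![1, 2, 3] : Fin 3 → Fin 4) k) = - dt4 p b a q *
      wedge a b ((![2, 3, 1] : Fin 3 → Fin 4) k) ((![3, 1, 2] : Fin 3 → Fin 4) k) := by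
  fin_cases k <;> simp [gr, dt4, wedge, B4] <;> ring

theorem gr_eq' (a b p q : Fin 4 → ℝ) (k : Fin 3) :
    gr a b p q ((![2, 3, 1] : Fin 3 → Fin 4) k) ((![3, 1, 2] : Fin 3 → Fin 4) k) =
      dt4 p b a q * wedge a b 0 ((![1, 2, 3] : Fin 3 → Fin 4) k) := by
  fin_cases k <;> simp [gr, dt4, wedge, B4] <;> ring

theorem gram_k (a b p q : Fin 4 → ℝ) (ha : B4 a a = 0) (hb : B4 b b = 0)
    (pa : B4 p a = 0) (pb : B4 p b = 0) (qa : B4 q a = 0) (qb : B4 q b = 0) (k : Fin 3) :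
    ((B4 a b ^ 2 : ℝ) : ℂ) * sd k (wedge p q)
      = - (⟨0, dt4 p b a q⟩ : ℂ) * sd k (wedge a b) := by
  have e1 := gr_eq a b p q k
  have e2 := gr_eq' a b p q k
  simp only [gr, ha, hb, pa, pb, qa, qb] at e1 e2
  apply Complex.ext
  · simp only [sd, Complex.mul_re, Complex.neg_re, Complex.neg_im, Complex.ofReal_re,
      Complex.ofReal_im]
    linear_combination -e1
  · simp only [sd, Complex.mul_im, Complex.neg_re, Complex.neg_im, Complex.ofReal_re,
      Complex.ofReal_im]
    linear_combination -e2

theorem hasDerivAt_B4_left {a : ℝ → Fin 4 → ℝ} {a' : Fin 4 → ℝ} {s : ℝ} (h : HasDerivAt a a' s)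
    (v : Fin 4 → ℝ) : HasDerivAt (fun u => B4 (a u) v) (B4 a' v) s := by
  have c := hasDerivAt_pi.1 h
  unfold B4
  exact ((((c 0).mul_const _).neg.add ((c 1).mul_const _)).add ((c 2).mul_const _)).add
    ((c 3).mul_const _)

theorem B4_comm (v w : Fin 4 → ℝ) : B4 v w = B4 w v := by unfold B4; ring

theorem hasDerivAt_B4_right {a : ℝ → Fin 4 → ℝ} {a' : Fin 4 → ℝ} {s : ℝ} (h : HasDerivAt a a' s)
    (v : Fin 4 → ℝ) : HasDerivAt (fun u => B4 v (a u)) (B4 v a') s := by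
  simpa only [B4_comm v] using hasDerivAt_B4_left h v

theorem B4_null_deriv {a : ℝ → Fin 4 → ℝ} {a' : Fin 4 → ℝ} {s : ℝ} {I : Set ℝ} (hI : IsOpen I)
    (hs : s ∈ I) (h : HasDerivAt a a' s) (h0 : ∀ s ∈ I, B4 (a s) (a s) = 0) :
    B4 a' (a s) = 0 := by
  have c := hasDerivAt_pi.1 h
  have e : HasDerivAt (fun u => B4 (a u) (a u)) (2 * B4 a' (a s)) s := by
    have := ((((c 0).mul (c 0)).neg.add ((c 1).mul (c 1))).add ((c 2).mul (c 2))).add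
      ((c 3).mul (c 3))
    unfold B4
    exact this.congr_deriv (by ring)
  have e2 : HasDerivAt (fun u => B4 (a u) (a u)) 0 s :=
    (hasDerivAt_const s (0 : ℝ)).congr_of_eventuallyEq
      (Filter.mem_of_superset (hI.mem_nhds hs) fun u hu => h0 u hu)
  have := e.unique e2
  linarith

section main
variable {α β : ℝ → Fin 4 → ℝ} {s t : ℝ}

theorem hasDerivAt_gauss_s (ha : HasDerivAt (deriv α) (deriv (deriv α) s) s)
    (h0 : B4 (deriv α s) (deriv β t) ≠ 0) :
    HasDerivAt (fun u => gaussMap α β u t)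
      ((1 / msq α β s t) • wedge (eta1 α β s t) (deriv β t)) s := by
  have c := hasDerivAt_pi.1 ha
  refine hasDerivAt_pi.2 fun i => hasDerivAt_pi.2 fun j => ?_
  have hB := hasDerivAt_B4_left ha (deriv β t)
  have := ((hasDerivAt_const s (1 : ℝ)).div hB.neg (neg_ne_zero.2 h0)).mul
    (((c i).mul_const (deriv β t j)).sub ((c j).mul_const (deriv β t i)))
  refine HasDerivAt.congr_deriv this ?_
  simp only [msq, wedge, eta1, Pi.smul_apply, Pi.sub_apply, smul_eq_mul]
  simp
  field_simp
  ring

theorem hasDerivAt_gauss_t (hb : HasDerivAt (deriv β) (deriv (deriv β) t) t)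
    (h0 : B4 (deriv α s) (deriv β t) ≠ 0) :
    HasDerivAt (fun u => gaussMap α β s u)
      ((1 / msq α β s t) • wedge (deriv α s) (eta2 α β s t)) t := by
  have c := hasDerivAt_pi.1 hb
  refine hasDerivAt_pi.2 fun i => hasDerivAt_pi.2 fun j => ?_
  have hB := hasDerivAt_B4_right hb (deriv α s)
  have := ((hasDerivAt_const t (1 : ℝ)).div hB.neg (neg_ne_zero.2 h0)).mul
    (((c j).const_mul (deriv α s i)).sub ((c i).const_mul (deriv α s j)))
  refine HasDerivAt.congr_deriv this ?_
  simp only [msq, wedge, eta2, Pi.smul_apply, Pi.sub_apply, smul_eq_mul, B4_comm _ (deriv α s)]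
  simp
  field_simp
  ring

theorem B4_eta (h0 : B4 (deriv α s) (deriv β t) ≠ 0) :
    B4 (eta1 α β s t) (eta2 α β s t) = B4 (deriv (deriv α) s) (deriv (deriv β) t)
      - B4 (deriv (deriv α) s) (deriv β t) * B4 (deriv α s) (deriv (deriv β) t)
        / B4 (deriv α s) (deriv β t) := by
  have lin : ∀ (x y z w : Fin 4 → ℝ) (c d : ℝ), B4 (x - c • y) (z - d • w) =
      B4 x z - d * B4 x w - c * B4 y z + c * d * B4 y w := by
    intros; simp [B4]; ring
  rw [eta1, eta2, lin, B4_comm (deriv (deriv β) t)]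
  field_simp
  ring

theorem hasDerivAt_gauss_st (ha : HasDerivAt (deriv α) (deriv (deriv α) s) s)
    (h0 : B4 (deriv α s) (deriv β t) ≠ 0) :
    HasDerivAt (fun u => (1 / msq α β u t) • wedge (deriv α u) (eta2 α β u t))
      ((B4 (eta1 α β s t) (eta2 α β s t) / msq α β s t ^ 2) • wedge (deriv α s) (deriv β t)
        + (1 / msq α β s t) • wedge (eta1 α β s t) (eta2 α β s t)) s := by
  have c := hasDerivAt_pi.1 ha
  refine hasDerivAt_pi.2 fun i => hasDerivAt_pi.2 fun j => ?_
  have hB := hasDerivAt_B4_left ha (deriv β t)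
  have hB' := hasDerivAt_B4_right ha (deriv (deriv β) t)
  have hq := fun j => ((hB'.div hB h0).mul_const (deriv β t j)).const_sub (deriv (deriv β) t j)
  have := ((hasDerivAt_const s (1 : ℝ)).div hB.neg (neg_ne_zero.2 h0)).mul
    (((c i).mul (hq j)).sub ((c j).mul (hq i)))
  refine HasDerivAt.congr_deriv this ?_
  rw [B4_eta h0]
  simp only [msq, wedge, eta1, eta2, Pi.smul_apply, Pi.sub_apply, Pi.add_apply, smul_eq_mul,
    B4_comm (deriv (deriv β) t)]
  simp
  field_simp
  ring

theorem eta_orth (h0 : B4 (deriv α s) (deriv β t) ≠ 0)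
    (ha : B4 (deriv α s) (deriv α s) = 0) (hb : B4 (deriv β t) (deriv β t) = 0)
    (ha' : B4 (deriv (deriv α) s) (deriv α s) = 0) (hb' : B4 (deriv (deriv β) t) (deriv β t) = 0) :
    B4 (eta1 α β s t) (deriv α s) = 0 ∧ B4 (eta1 α β s t) (deriv β t) = 0 ∧
    B4 (eta2 α β s t) (deriv α s) = 0 ∧ B4 (eta2 α β s t) (deriv β t) = 0 := by
  have lin : ∀ (x y z : Fin 4 → ℝ) (c : ℝ), B4 (x - c • y) z = B4 x z - c * B4 y z := by
    intros; simp [B4]; ring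
  simp only [eta1, eta2, lin, ha, hb, ha', hb', B4_comm (deriv β t) (deriv α s)]
  refine ⟨by simp, ?_, ?_, by simp⟩ <;> field_simp <;> ring

end main
theorem pds_sdL {I J : Set ℝ} (hI : IsOpen I) (hJ : IsOpen J) {f : ℝ → ℝ → Fin 4 → Fin 4 → ℝ}
    (h : Gd I J f) (k : Fin 3) {s t : ℝ} (hs : s ∈ I) (ht : t ∈ J) :
    pds (fun s t => sdL k (f s t)) s t = sdL k (pds f s t) :=
  ((sdL k).hasFDerivAt.comp_hasDerivAt s (h.dS hI hJ hs ht)).deriv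

theorem pdt_sdL {I J : Set ℝ} (hI : IsOpen I) (hJ : IsOpen J) {f : ℝ → ℝ → Fin 4 → Fin 4 → ℝ}
    (h : Gd I J f) (k : Fin 3) {s t : ℝ} (hs : s ∈ I) (ht : t ∈ J) :
    pdt (fun s t => sdL k (f s t)) s t = sdL k (pdt f s t) :=
  ((sdL k).hasFDerivAt.comp_hasDerivAt t (h.dT hI hJ hs ht)).deriv

theorem pds_congr {E : Type*} [NormedAddCommGroup E] [NormedSpace ℝ E] {I J : Set ℝ}
    (hI : IsOpen I) {f g : ℝ → ℝ → E} {s t : ℝ}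
    (hfg : ∀ s ∈ I, ∀ t ∈ J, f s t = g s t) (hs : s ∈ I) (ht : t ∈ J) :
    pds f s t = pds g s t :=
  Filter.EventuallyEq.deriv_eq
    (Filter.mem_of_superset (hI.mem_nhds hs) fun u hu => hfg u hu t ht)

theorem pdt_congr {E : Type*} [NormedAddCommGroup E] [NormedSpace ℝ E] {I J : Set ℝ}
    (hJ : IsOpen J) {f g : ℝ → ℝ → E} {s t : ℝ}
    (hfg : ∀ s ∈ I, ∀ t ∈ J, f s t = g s t) (hs : s ∈ I) (ht : t ∈ J) :
    pdt f s t = pdt g s t :=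
  Filter.EventuallyEq.deriv_eq
    (Filter.mem_of_superset (hJ.mem_nhds ht) fun u hu => hfg s hs u hu)

theorem pdsdt_sdL {I J : Set ℝ} (hI : IsOpen I) (hJ : IsOpen J) {f : ℝ → ℝ → Fin 4 → Fin 4 → ℝ}
    (h : Gd I J f) (k : Fin 3) {s t : ℝ} (hs : s ∈ I) (ht : t ∈ J) :
    pds (pdt (fun s t => sdL k (f s t))) s t = sdL k (pds (pdt f) s t) := by
  rw [pds_congr hI (fun s hs t ht => pdt_sdL hI hJ h k hs ht) hs ht]
  exact pds_sdL hI hJ (h.pdt hI hJ) k hs ht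

/-- Corollary 4.3: if the Gauss map of a minimal Lorentzian surface in `𝔼⁴₁` is
biharmonic (`Δ²ν = 0`), then it is harmonic (`Δν = 0`). -/
theorem biharmonic_gaussMap_is_harmonic
    (I₁ I₂ : Set ℝ) (hI₁ : IsOpen I₁) (hI₂ : IsOpen I₂)
    (hI₁' : I₁.OrdConnected) (hI₂' : I₂.OrdConnected)
    (α β : ℝ → Fin 4 → ℝ)
    (hα : ContDiffOn ℝ (⊤ : ℕ∞) α I₁) (hβ : ContDiffOn ℝ (⊤ : ℕ∞) β I₂)
    (hαnull : ∀ s ∈ I₁, B4 (deriv α s) (deriv α s) = 0)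
    (hβnull : ∀ t ∈ I₂, B4 (deriv β t) (deriv β t) = 0)
    (hneg : ∀ s ∈ I₁, ∀ t ∈ I₂, B4 (deriv α s) (deriv β t) < 0)
    (hbih : ∀ s ∈ I₁, ∀ t ∈ I₂, lap α β (lap α β (gaussMap α β)) s t = 0) :
    ∀ s ∈ I₁, ∀ t ∈ I₂, lap α β (gaussMap α β) s t = 0 := by
  have ca : ContDiffOn ℝ ∞ (deriv α) I₁ := hα.deriv_of_isOpen hI₁ (by simp)
  have cb : ContDiffOn ℝ ∞ (deriv β) I₂ := hβ.deriv_of_isOpen hI₂ (by simp)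
  have da : ∀ s ∈ I₁, HasDerivAt (deriv α) (deriv (deriv α) s) s := fun s hs =>
    ((ca.contDiffAt (hI₁.mem_nhds hs)).differentiableAt (by simp)).hasDerivAt
  have db : ∀ t ∈ I₂, HasDerivAt (deriv β) (deriv (deriv β) t) t := fun t ht =>
    ((cb.contDiffAt (hI₂.mem_nhds ht)).differentiableAt (by simp)).hasDerivAt
  have hne : ∀ s ∈ I₁, ∀ t ∈ I₂, B4 (deriv α s) (deriv β t) ≠ 0 := fun s hs t ht =>
    (hneg s hs t ht).ne
  have hm : ∀ s ∈ I₁, ∀ t ∈ I₂, msq α β s t ≠ 0 := fun s hs t ht =>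
    neg_ne_zero.2 (hne s hs t ht)
  have Ga : ∀ i, Gd I₁ I₂ (fun s _ => deriv α s i) := fun i =>
    (contDiffOn_pi.1 ca i).comp contDiffOn_fst (fun p hp => hp.1)
  have Gb : ∀ i, Gd I₁ I₂ (fun _ t => deriv β t i) := fun i =>
    (contDiffOn_pi.1 cb i).comp contDiffOn_snd (fun p hp => hp.2)
  have Gm : Gd I₁ I₂ (msq α β) :=
    (((((Ga 0).mul (Gb 0)).neg.add ((Ga 1).mul (Gb 1))).add ((Ga 2).mul (Gb 2))).add
      ((Ga 3).mul (Gb 3))).neg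
  have Gdiv : ∀ c : ℝ, Gd I₁ I₂ (fun s t => c / msq α β s t) := fun c =>
    ContDiffOn.div contDiffOn_const Gm (fun p hp => hm p.1 hp.1 p.2 hp.2)
  have Gν : Gd I₁ I₂ (gaussMap α β) :=
    contDiffOn_pi.2 fun i => contDiffOn_pi.2 fun j =>
      (Gdiv 1).mul (((Ga i).mul (Gb j)).sub ((Ga j).mul (Gb i)))
  have Gst : Gd I₁ I₂ (pds (pdt (gaussMap α β))) := (Gν.pdt hI₁ hI₂).pds hI₁ hI₂
  have Glap : Gd I₁ I₂ (lap α β (gaussMap α β)) := ContDiffOn.smul (Gdiv 2) Gst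
  have vs : ∀ s ∈ I₁, ∀ t ∈ I₂, pds (gaussMap α β) s t =
      (1 / msq α β s t) • wedge (eta1 α β s t) (deriv β t) := fun s hs t ht =>
    (hasDerivAt_gauss_s (da s hs) (hne s hs t ht)).deriv
  have vt : ∀ s ∈ I₁, ∀ t ∈ I₂, pdt (gaussMap α β) s t =
      (1 / msq α β s t) • wedge (deriv α s) (eta2 α β s t) := fun s hs t ht =>
    (hasDerivAt_gauss_t (db t ht) (hne s hs t ht)).deriv
  have vst : ∀ s ∈ I₁, ∀ t ∈ I₂, pds (pdt (gaussMap α β)) s t =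
      (B4 (eta1 α β s t) (eta2 α β s t) / msq α β s t ^ 2) • wedge (deriv α s) (deriv β t)
        + (1 / msq α β s t) • wedge (eta1 α β s t) (eta2 α β s t) := fun s hs t ht =>
    pds_eq_of hI₁ vt hs ht (hasDerivAt_gauss_st (da s hs) (hne s hs t ht))
  have orth := fun s hs t ht => eta_orth (hne s hs t ht) (hαnull s hs) (hβnull t ht)
    (B4_null_deriv hI₁ hs (da s hs) hαnull) (B4_null_deriv hI₂ ht (db t ht) hβnull)
  have fin := abstractH hI₁ hI₂ (fun k s t => sdL k (gaussMap α β s t))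
    (fun s t => ((2 / msq α β s t : ℝ) : ℂ))
    (fun k => (sdL k).contDiff.comp_contDiffOn Gν)
    (Complex.ofRealCLM.contDiff.comp_contDiffOn (Gdiv 2))
    (fun s hs t ht => by
      have := hm s hs t ht
      exact_mod_cast div_ne_zero two_ne_zero this)
    (fun s hs t ht => by
      have e := sd_dot (deriv α s) (deriv β t) (deriv α s) (deriv β t)
      have hM : (msq α β s t : ℂ) ≠ 0 := by exact_mod_cast hm s hs t ht
      have e' : (⟨B4 (deriv α s) (deriv β t) * B4 (deriv β t) (deriv α s)
          - B4 (deriv α s) (deriv α s) * B4 (deriv β t) (deriv β t),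
          dt4 (deriv α s) (deriv β t) (deriv α s) (deriv β t)⟩ : ℂ) = (msq α β s t : ℂ) ^ 2 := by
        rw [← Complex.ofReal_pow, hαnull s hs, B4_comm (deriv β t)]
        apply Complex.ext
        · simp only [Complex.ofReal_re, msq]; ring
        · simp only [Complex.ofReal_im, dt4, wedge]; ring
      rw [e'] at e
      simp only [gaussMap, map_smul, sdL_apply, Complex.real_smul]
      push_cast
      field_simp
      linear_combination e)
    (fun s hs t ht => by
      obtain ⟨pa, pb, qa, qb⟩ := orth s hs t ht
      have e := sd_dot (deriv α s) (eta2 α β s t) (deriv α s) (eta2 α β s t)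
      have e' : (⟨B4 (deriv α s) (eta2 α β s t) * B4 (eta2 α β s t) (deriv α s)
          - B4 (deriv α s) (deriv α s) * B4 (eta2 α β s t) (eta2 α β s t),
          dt4 (deriv α s) (eta2 α β s t) (deriv α s) (eta2 α β s t)⟩ : ℂ) = 0 := by
        rw [hαnull s hs, qa]
        apply Complex.ext
        · simp
        · simp only [Complex.zero_im, dt4, wedge]; ring
      rw [e'] at e
      simp only [pdt_sdL hI₁ hI₂ Gν _ hs ht]
      simp only [vt s hs t ht, map_smul, sdL_apply, Complex.real_smul]
      linear_combination ((1 / msq α β s t : ℝ) : ℂ) ^ 2 * e)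
    (fun s hs t ht k => by
      obtain ⟨pa, pb, qa, qb⟩ := orth s hs t ht
      have e := sd_dot (eta1 α β s t) (deriv β t) (deriv α s) (eta2 α β s t)
      have hM : (msq α β s t : ℂ) ≠ 0 := by exact_mod_cast hm s hs t ht
      have e' : (⟨B4 (eta1 α β s t) (eta2 α β s t) * B4 (deriv β t) (deriv α s)
          - B4 (eta1 α β s t) (deriv α s) * B4 (deriv β t) (eta2 α β s t),
          dt4 (eta1 α β s t) (deriv β t) (deriv α s) (eta2 α β s t)⟩ : ℂ)
          = - (B4 (eta1 α β s t) (eta2 α β s t) : ℂ) * (msq α β s t : ℂ)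
            + ⟨0, dt4 (eta1 α β s t) (deriv β t) (deriv α s) (eta2 α β s t)⟩ := by
        rw [pa, B4_comm (deriv β t) (deriv α s)]
        apply Complex.ext <;> simp [msq]
      rw [e'] at e
      have g := gram_k (deriv α s) (deriv β t) (eta1 α β s t) (eta2 α β s t) (hαnull s hs)
        (hβnull t ht) pa pb qa qb k
      have hBm : B4 (deriv α s) (deriv β t) = - msq α β s t := by simp [msq]
      rw [hBm] at g
      push_cast at g
      simp only [pdsdt_sdL hI₁ hI₂ Gν _ hs ht, pdt_sdL hI₁ hI₂ Gν _ hs ht,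
        pds_sdL hI₁ hI₂ Gν _ hs ht]
      simp only [vt s hs t ht, vs s hs t ht, vst s hs t ht,
        map_smul, map_add, Complex.real_smul]
      simp only [gaussMap, map_smul, sdL_apply, Complex.real_smul]
      push_cast
      generalize (⟨0, dt4 (eta1 α β s t) (deriv β t) (deriv α s) (eta2 α β s t)⟩ : ℂ) = D at *
      field_simp
      linear_combination g + sd k (wedge (deriv α s) (deriv β t)) * e)
    (fun s hs t ht k => by
      have e : pds (pdt (lap α β (gaussMap α β))) s t = 0 := by
        have := hbih s hs t ht
        rw [lap] at this
        exact (smul_eq_zero.1 this).resolve_left (div_ne_zero two_ne_zero (hm s hs t ht))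
      have e2 := pdsdt_sdL hI₁ hI₂ Glap k hs ht
      rw [e, map_zero] at e2
      rw [← e2]
      refine pds_congr hI₁ (fun s hs t ht => pdt_congr hI₂ (fun s hs t ht => ?_) hs ht) hs ht
      rw [pdsdt_sdL hI₁ hI₂ Gν _ hs ht, lap, map_smul, Complex.real_smul])
  intro s hs t ht
  have f := fin s hs t ht
  simp only [pdsdt_sdL hI₁ hI₂ Gν _ hs ht] at f
  simp only [sdL_apply] at f
  have anti : ∀ i j, pds (pdt (gaussMap α β)) s t i j = - pds (pdt (gaussMap α β)) s t j i := by
    intro i j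
    rw [vst s hs t ht]
    simp only [wedge, Pi.add_apply, Pi.smul_apply, smul_eq_mul]
    ring
  rw [lap]
  generalize pds (pdt (gaussMap α β)) s t = x0 at *
  suffices x0 = 0 by rw [this, smul_zero]
  have r0 := fun k => congrArg Complex.re (f k)
  have r1 := fun k => congrArg Complex.im (f k)
  have a0 := r0 0
  have a1 := r0 1
  have a2 := r0 2
  have b0 := r1 0
  have b1 := r1 1
  have b2 := r1 2
  simp [sd] at a0 a1 a2 b0 b1 b2
  ext i j
  have q := anti i j
  have q' := anti i i
  fin_cases i <;> fin_cases j <;> simp at q q' ⊢ <;> linarith
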